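/- (Determinantal minor summation formula) Let l be even, ln ≤ N, H(s) an ln×N matrix for 1 ≤ s ≤ r, and A an r-dimensional l-block array of size N. Then ∑_{P^(1),…,P^(r) ∈ C([N],ln)} Pf^[l,r](A_{P^(1),…,P^(r)}) ∏_{s=1}^r det H(s)_{[ln],P^(s)} = Pf^[l,r](Q), where Q(I^(1),…,I^(r)) = ∑_{K^(1),…,K^(r) ∈ C([N],l)} A(K^(1),…,K^(r)) ∏_{s=1}^r det(H(s)_{I^(s),K^(s)}). -/

import Mathlib

open scoped Classical
open Finset Equiv

noncomputable section

variable {F : Type*} [Field F] [CharZero F]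

/-- The hyperdeterminant `det^[m]` of an `m`-dimensional tensor of size `n`:
`∑_{σ₁,…,σ_{m-1}} sgn(σ₁⋯σ_{m-1}) ∏_i A(i, σ₁ i, …, σ_{m-1} i)`, encoded as a sum over
`m`-tuples of permutations whose `0`-th component is forced to be the identity. -/
def hyperdet (m n : ℕ) (A : (Fin m → Fin n) → F) : F :=
  ∑ σ : Fin m → Equiv.Perm (Fin n),
    if (∀ k : Fin m, k.1 = 0 → σ k = 1) then
      (∏ k, ((Equiv.Perm.sign (σ k) : ℤ) : F)) * ∏ i, A fun k => σ k i
    else 0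

/-- `blk l n j i` is the `i`-th entry of the `j`-th consecutive block of length `l` in `[l*n]`. -/
def blk (l n : ℕ) (j : Fin n) (i : Fin l) : Fin (l * n) :=
  ⟨j.1 * l + i.1, by
    have hi := i.2; have hj := j.2
    calc j.1 * l + i.1 < (j.1 + 1) * l := by rw [Nat.add_mul, Nat.one_mul]; omega
      _ ≤ n * l := Nat.mul_le_mul_right l hj
      _ = l * n := Nat.mul_comm n l⟩

/-- A permutation of `[l*n]` is block-increasing if it is increasing on each of the
`n` consecutive blocks of length `l`. -/
def BlockInc (l n : ℕ) (σ : Equiv.Perm (Fin (l * n))) : Prop :=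
  ∀ j : Fin n, StrictMono fun i : Fin l => σ (blk l n j i)

/-- The `j`-th block of `σ`, as a subset of `[l*n]`. -/
def blkSet (l n : ℕ) (σ : Equiv.Perm (Fin (l * n))) (j : Fin n) : Finset (Fin (l * n)) :=
  Finset.image (fun i => σ (blk l n j i)) Finset.univ

/-- The hyperpfaffian `Pf^[l,m]` of an `m`-dimensional `l`-block array of size `l*n`
(the `m` dimensions are indexed by an arbitrary finite type `ι`). -/
def hyperpf (l n : ℕ) {ι : Type*} [Fintype ι]
    (B : (ι → Finset (Fin (l * n))) → F) : F :=
  (n.factorial : F)⁻¹ *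
    ∑ σ : ι → Equiv.Perm (Fin (l * n)),
      if ∀ s, BlockInc l n (σ s) then
        (∏ s, ((Equiv.Perm.sign (σ s) : ℤ) : F)) *
          ∏ k : Fin n, B fun s => blkSet l n (σ s) k
      else 0

/-- The hyperhafnian `Hf^[l,m]` (same sum as the hyperpfaffian, without signs). -/
def hyperhf (l n : ℕ) {ι : Type*} [Fintype ι]
    (B : (ι → Finset (Fin (l * n))) → F) : F :=
  (n.factorial : F)⁻¹ *
    ∑ σ : ι → Equiv.Perm (Fin (l * n)),
      if ∀ s, BlockInc l n (σ s) then
        ∏ k : Fin n, B fun s => blkSet l n (σ s) k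
      else 0

/-!
Expand both sides over families `G` of increasing `l`-tuples `G s k` in `[N]`, one for each
dimension `s` and each block `k`. An increasing `ln`-tuple cut up by a block-increasing permutation
is the same as `n` increasing `l`-tuples without common entries, so the left-hand side becomes a sum
over those `G` for which, for each `s`, the tuples `G s k` are disjoint. The other `G` may be added
at no cost, because a determinant with a repeated column vanishes. The factors belonging to `G` on
the right-hand side combine to the same determinants, by Laplace expansion along blocks of columns.
-/

section FamilySums

variable {ι M : Type*} [Fintype ι] [DecidableEq ι] [AddCommMonoid M]

theorem sum_dite_forall {α : Type*} [Fintype α] (p : α → Prop) [Fintype {a // p a}]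
    [DecidablePred fun x : ι → α => ∀ s, p (x s)] (f : (ι → {a // p a}) → M) :
    (∑ x : ι → α, if h : ∀ s, p (x s) then f fun s => ⟨x s, h s⟩ else 0) = ∑ y, f y := by
  symm
  refine Fintype.sum_of_injective (Pi.map fun _ => Subtype.val)
    (.piMap fun _ => Subtype.val_injective) _ _ (fun x hx => dif_neg fun h => hx ?_) fun y => ?_
  · exact ⟨fun s => ⟨x s, h s⟩, rfl⟩
  · simp only [Pi.map_apply, Subtype.coe_eta, Subtype.prop, implies_true, dite_true]

theorem sum_dite_card_eq {κ : Type*} [Fintype κ] [LinearOrder κ] (m : ℕ)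
    [DecidablePred fun P : ι → Finset κ => ∀ s, (P s).card = m] (f : (ι → (Fin m ↪o κ)) → M) :
    (∑ P : ι → Finset κ,
      if h : ∀ s, (P s).card = m then f fun s => (P s).orderEmbOfFin (h s) else 0) =
      ∑ g, f g := by
  let e : {P : Finset κ // P.card = m} ≃ (Fin m ↪o κ) := Set.powersetCard.ofFinEmbEquiv.symm
  calc
    _ = ∑ P : ι → {P : Finset κ // P.card = m}, f fun s => e (P s) := sum_dite_forall _ _
    _ = ∑ g, f g := (Equiv.piCongrRight fun _ => e).sum_comp f

end FamilySums

section Blocks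

variable {l n : ℕ}

/-- The division of `[l*n]` into `n` consecutive blocks of length `l`: the pair `(k, i)` is sent to
`blk l n k i`. -/
def blkEquiv (l n : ℕ) : Fin n × Fin l ≃ Fin (l * n) :=
  finProdFinEquiv.trans (finCongr (Nat.mul_comm n l))

theorem blkEquiv_apply (k : Fin n) (i : Fin l) : blkEquiv l n (k, i) = blk l n k i :=
  Fin.ext (by simp [blkEquiv, blk, Nat.mul_comm, Nat.add_comm])

theorem blk_right_injective (k : Fin n) : Function.Injective (blk l n k) := by
  simpa only [Function.comp_def, blkEquiv_apply] using
    (blkEquiv l n).injective.comp (Prod.mk_right_injective k)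

theorem funext_blk {α : Type*} {f g : Fin (l * n) → α}
    (h : ∀ k i, f (blk l n k i) = g (blk l n k i)) : f = g := by
  refine (blkEquiv l n).surjective.injective_comp_right (funext fun ⟨k, i⟩ => ?_)
  simpa only [Function.comp_apply, blkEquiv_apply] using h k i

theorem prod_blk {M : Type*} [CommMonoid M] (f : Fin (l * n) → M) :
    ∏ x, f x = ∏ k, ∏ i, f (blk l n k i) := by
  simp only [← (blkEquiv l n).prod_comp, Fintype.prod_prod_type, blkEquiv_apply]

/-- The permutation of `[l*n]` that preserves every block and acts on the `k`-th one as `ρ k`. -/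
def blkPerm (ρ : Fin n → Perm (Fin l)) : Perm (Fin (l * n)) :=
  (blkEquiv l n).permCongr (Equiv.prodCongrRight ρ)

theorem blkPerm_blk (ρ : Fin n → Perm (Fin l)) (k : Fin n) (i : Fin l) :
    blkPerm ρ (blk l n k i) = blk l n k (ρ k i) := by
  simp [blkPerm, ← blkEquiv_apply, Equiv.permCongr_apply]

theorem sign_blkPerm (ρ : Fin n → Perm (Fin l)) :
    Perm.sign (blkPerm ρ) = ∏ k, Perm.sign (ρ k) := by
  rw [blkPerm, Perm.sign_permCongr, Perm.sign_prodCongrRight]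

/-- The concatenation of `n` tuples of length `l`, as a tuple of length `l*n`. -/
def joinBlocks {α : Type*} (G : Fin n → Fin l → α) (x : Fin (l * n)) : α :=
  Function.uncurry G ((blkEquiv l n).symm x)

theorem joinBlocks_blk {α : Type*} (G : Fin n → Fin l → α) (k : Fin n) (i : Fin l) :
    joinBlocks G (blk l n k i) = G k i := by
  simp [joinBlocks, ← blkEquiv_apply]

end Blocks

/-- The type of block-increasing permutations of `[l*n]`. -/
abbrev BlockIncPerm (l n : ℕ) : Type := {σ : Perm (Fin (l * n)) // BlockInc l n σ}

namespace BlockIncPerm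

variable {l n : ℕ}

/-- The restriction of a block-increasing permutation to the `k`-th block, which is the increasing
enumeration of `blkSet l n σ k`. -/
def blockEmb (σ : BlockIncPerm l n) (k : Fin n) : Fin l ↪o Fin (l * n) :=
  OrderEmbedding.ofStrictMono _ (σ.2 k)

theorem blockEmb_apply (σ : BlockIncPerm l n) (k : Fin n) (i : Fin l) :
    σ.blockEmb k i = σ.1 (blk l n k i) := rfl

theorem ext_blockEmb {σ τ : BlockIncPerm l n} (h : ∀ k, σ.blockEmb k = τ.blockEmb k) : σ = τ :=
  Subtype.ext (Equiv.coe_fn_injective (funext_blk fun k i => DFunLike.congr_fun (h k) i))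

theorem map_blockEmb_univ (σ : BlockIncPerm l n) (k : Fin n) :
    univ.map (σ.blockEmb k).toEmbedding = blkSet l n σ.1 k :=
  map_eq_image _ _

theorem card_blkSet (σ : BlockIncPerm l n) (k : Fin n) : (blkSet l n σ.1 k).card = l := by
  simp [← map_blockEmb_univ]

theorem orderEmbOfFin_blkSet (σ : BlockIncPerm l n) (k : Fin n) :
    (blkSet l n σ.1 k).orderEmbOfFin (σ.card_blkSet k) = σ.blockEmb k :=
  (orderEmbOfFin_unique' _ fun i => by simp [← map_blockEmb_univ]).symm

theorem mul_blkPerm_injective : Function.Injective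
    fun p : BlockIncPerm l n × (Fin n → Perm (Fin l)) => p.1.1 * blkPerm p.2 := by
  rintro ⟨σ, ρ⟩ ⟨τ, π⟩ h
  have hblock : ∀ k, σ.blockEmb k ∘ ρ k = τ.blockEmb k ∘ π k := fun k => funext fun i => by
    simpa [blkPerm_blk, blockEmb_apply] using DFunLike.congr_fun h (blk l n k i)
  obtain rfl : σ = τ := ext_blockEmb fun k => OrderEmbedding.range_inj.1 <| by
    rw [← (ρ k).surjective.range_comp, hblock, (π k).surjective.range_comp]
  obtain rfl : ρ = π := funext fun k => Equiv.ext fun i =>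
    (σ.blockEmb k).injective (congrFun (hblock k) i)
  rfl

theorem blockInc_mul_blkPerm_sort (τ : Perm (Fin (l * n))) :
    BlockInc l n (τ * blkPerm fun k => Tuple.sort fun i => τ (blk l n k i)) := by
  intro k
  have hinj : Function.Injective fun i => τ (blk l n k i) :=
    τ.injective.comp (blk_right_injective k)
  simpa only [Perm.mul_apply, blkPerm_blk, Function.comp_def] using
    (Tuple.monotone_sort _).strictMono_of_injective (hinj.comp (Tuple.sort _).injective)

theorem mul_blkPerm_surjective : Function.Surjective
    fun p : BlockIncPerm l n × (Fin n → Perm (Fin l)) => p.1.1 * blkPerm p.2 := by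
  intro τ
  refine ⟨(⟨_, blockInc_mul_blkPerm_sort τ⟩, fun k => (Tuple.sort fun i => τ (blk l n k i))⁻¹),
    Equiv.coe_fn_injective (funext_blk fun k i => ?_)⟩
  simp [blkPerm_blk]

end BlockIncPerm

section Laplace

variable {l n : ℕ} {R : Type*} [CommRing R]

theorem det_eq_sum_blockIncPerm (M : Matrix (Fin (l * n)) (Fin (l * n)) R) :
    M.det = ∑ σ : BlockIncPerm l n, ((Perm.sign σ.1 : ℤ) : R) *
      ∏ k, (M.submatrix (σ.blockEmb k) (blk l n k)).det := by
  rw [Matrix.det_apply', ← Function.Bijective.sum_comp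
    ⟨BlockIncPerm.mul_blkPerm_injective, BlockIncPerm.mul_blkPerm_surjective⟩,
    Fintype.sum_prod_type]
  refine sum_congr rfl fun σ _ => ?_
  simp only [Matrix.det_apply', Fintype.prod_sum, mul_sum]
  refine sum_congr rfl fun ρ _ => ?_
  simp [prod_blk, blkPerm_blk, sign_blkPerm, BlockIncPerm.blockEmb_apply, prod_mul_distrib,
    mul_assoc]

theorem det_submatrix_joinBlocks {κ : Type*} (M : Matrix (Fin (l * n)) κ R)
    (G : Fin n → Fin l → κ) :
    (M.submatrix id (joinBlocks G)).det = ∑ σ : BlockIncPerm l n,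
      ((Perm.sign σ.1 : ℤ) : R) * ∏ k, (M.submatrix (σ.blockEmb k) (G k)).det := by
  simp only [det_eq_sum_blockIncPerm (M.submatrix id _), Matrix.submatrix_submatrix,
    Function.comp_def, joinBlocks_blk, id]

theorem prod_det_submatrix_joinBlocks {ι κ : Type*} [Fintype ι] [DecidableEq ι]
    (H : ι → Matrix (Fin (l * n)) κ R) (G : ι → Fin n → Fin l → κ) :
    ∏ s, ((H s).submatrix id (joinBlocks (G s))).det = ∑ σ : ι → BlockIncPerm l n,
      (∏ s, ((Perm.sign (σ s).1 : ℤ) : R)) *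
        ∏ k, ∏ s, ((H s).submatrix ((σ s).blockEmb k) (G s k)).det := by
  simp only [det_submatrix_joinBlocks, Fintype.prod_sum, prod_mul_distrib]
  exact sum_congr rfl fun σ _ => congrArg _ prod_comm

theorem det_submatrix_eq_zero_of_not_injective {m κ : Type*} [Fintype m] [DecidableEq m]
    (M : Matrix m κ R) {f : m → κ} (hf : ¬ Function.Injective f) :
    (M.submatrix id f).det = 0 := by
  obtain ⟨x, y, hxy, hne⟩ := Function.not_injective_iff.1 hf
  exact Matrix.det_zero_of_column_eq hne fun a => congrArg (M a) hxy

end Laplace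

section CutBlocks

variable {l n : ℕ} {κ : Type*} [LinearOrder κ]

/-- The `n` increasing `l`-tuples obtained from an increasing `l*n`-tuple by distributing its
entries over the blocks according to a block-increasing permutation. -/
def cutBlocks (p : (Fin (l * n) ↪o κ) × BlockIncPerm l n) (k : Fin n) : Fin l ↪o κ :=
  (p.2.blockEmb k).trans p.1

theorem joinBlocks_cutBlocks (p : (Fin (l * n) ↪o κ) × BlockIncPerm l n) :
    joinBlocks (fun k => cutBlocks p k) = p.1 ∘ p.2.1 :=
  funext_blk fun k i => joinBlocks_blk _ k i

theorem map_cutBlocks_univ (p : (Fin (l * n) ↪o κ) × BlockIncPerm l n) (k : Fin n) :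
    univ.map (cutBlocks p k).toEmbedding = (blkSet l n p.2.1 k).map p.1.toEmbedding := by
  rw [← BlockIncPerm.map_blockEmb_univ, map_map]
  rfl

theorem cutBlocks_injective :
    Function.Injective (cutBlocks : (Fin (l * n) ↪o κ) × BlockIncPerm l n → _) := by
  rintro ⟨P, σ⟩ ⟨P', σ'⟩ h
  have hjoin : P ∘ σ.1 = P' ∘ σ'.1 := by
    rw [← joinBlocks_cutBlocks (P, σ), h, joinBlocks_cutBlocks]
  obtain rfl : P = P' := OrderEmbedding.range_inj.1 <| by
    rw [← σ.1.surjective.range_comp, hjoin, σ'.1.surjective.range_comp]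
  obtain rfl : σ = σ' := Subtype.ext (Equiv.ext fun x => P.injective (congrFun hjoin x))
  rfl

theorem mem_range_cutBlocks {G : Fin n → (Fin l ↪o κ)}
    (hG : Function.Injective (joinBlocks fun k => G k)) : G ∈ Set.range cutBlocks := by
  let f := joinBlocks fun k => G k
  have hP : StrictMono (f ∘ Tuple.sort f) :=
    (Tuple.monotone_sort f).strictMono_of_injective (hG.comp (Tuple.sort f).injective)
  have hσ : BlockInc l n (Tuple.sort f)⁻¹ := fun k a b hab => hP.lt_iff_lt.1 <| by
    simpa [f, joinBlocks_blk] using hab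
  refine ⟨(OrderEmbedding.ofStrictMono _ hP, ⟨(Tuple.sort f)⁻¹, hσ⟩), funext fun k => ?_⟩
  ext i
  simp [cutBlocks, BlockIncPerm.blockEmb_apply, f, joinBlocks_blk]

theorem det_submatrix_joinBlocks_cutBlocks {R : Type*} [CommRing R]
    (M : Matrix (Fin (l * n)) κ R) (p : (Fin (l * n) ↪o κ) × BlockIncPerm l n) :
    (M.submatrix id (joinBlocks fun k => cutBlocks p k)).det =
      ((Perm.sign p.2.1 : ℤ) : R) * (M.submatrix id p.1).det := by
  rw [joinBlocks_cutBlocks, ← Matrix.det_permute']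
  rfl

theorem sum_comp_cutBlocks [Fintype κ] {ι M : Type*} [Fintype ι] [DecidableEq ι] [AddCommMonoid M]
    (f : (ι → Fin n → (Fin l ↪o κ)) → M)
    (hf : ∀ G s, ¬ Function.Injective (joinBlocks fun k => G s k) → f G = 0) :
    (∑ P : ι → (Fin (l * n) ↪o κ), ∑ σ : ι → BlockIncPerm l n,
      f fun s => cutBlocks (P s, σ s)) = ∑ G, f G := by
  rw [← Fintype.sum_prod_type', ← (Equiv.arrowProdEquivProdArrow ι _ _).sum_comp]
  refine Fintype.sum_of_injective (Pi.map fun _ => cutBlocks) (.piMap fun _ => cutBlocks_injective)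
    _ _ (fun G hG => ?_) fun _ => rfl
  contrapose! hG
  choose p hp using fun s => mem_range_cutBlocks (not_not.1 (mt (hf G s) hG))
  exact ⟨p, funext hp⟩

end CutBlocks

section Hyperpfaffian

variable {l n : ℕ} {ι κ : Type*} [Fintype ι] [DecidableEq ι] [Fintype κ] [LinearOrder κ]
  {R : Type*} [Field R]

theorem hyperpf_eq_sum_blockIncPerm (B : (ι → Finset (Fin (l * n))) → R) :
    hyperpf l n B = (n.factorial : R)⁻¹ * ∑ σ : ι → BlockIncPerm l n,
      (∏ s, ((Perm.sign (σ s).1 : ℤ) : R)) * ∏ k, B fun s => blkSet l n (σ s).1 k := by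
  rw [hyperpf, ← sum_dite_forall]
  congr!

theorem sum_hyperpf_map_mul_prod_det (H : ι → Matrix (Fin (l * n)) κ R)
    (A : (ι → Finset κ) → R) :
    (∑ P : ι → (Fin (l * n) ↪o κ),
      hyperpf l n (fun I => A fun s => (I s).map (P s).toEmbedding) *
        ∏ s, ((H s).submatrix id (P s)).det) =
      (n.factorial : R)⁻¹ * ∑ G : ι → Fin n → (Fin l ↪o κ),
        (∏ k, A fun s => univ.map (G s k).toEmbedding) *
          ∏ s, ((H s).submatrix id (joinBlocks fun k => G s k)).det := by
  rw [← sum_comp_cutBlocks]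
  · simp only [hyperpf_eq_sum_blockIncPerm, mul_assoc, ← mul_sum, sum_mul, map_cutBlocks_univ,
      det_submatrix_joinBlocks_cutBlocks, prod_mul_distrib, mul_left_comm (∏ _, A _)]
  · exact fun G s hs => mul_eq_zero_of_right _ <| prod_eq_zero (mem_univ s) <|
      det_submatrix_eq_zero_of_not_injective _ hs

theorem hyperpf_eq_sum_joinBlocks (H : ι → Matrix (Fin (l * n)) κ R) (A : (ι → Finset κ) → R)
    (Q : (ι → Finset (Fin (l * n))) → R)
    (hQ : ∀ (σ : ι → BlockIncPerm l n) k, Q (fun s => blkSet l n (σ s).1 k) =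
      ∑ g : ι → (Fin l ↪o κ), (A fun s => univ.map (g s).toEmbedding) *
        ∏ s, ((H s).submatrix ((σ s).blockEmb k) (g s)).det) :
    hyperpf l n Q = (n.factorial : R)⁻¹ * ∑ G : ι → Fin n → (Fin l ↪o κ),
      (∏ k, A fun s => univ.map (G s k).toEmbedding) *
        ∏ s, ((H s).submatrix id (joinBlocks fun k => G s k)).det := by
  simp only [hyperpf_eq_sum_blockIncPerm, hQ, Fintype.prod_sum,
    prod_det_submatrix_joinBlocks, mul_sum]
  rw [sum_comm, ← (Equiv.piComm _).sum_comp]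
  refine sum_congr rfl fun G _ => sum_congr rfl fun σ _ => ?_
  rw [prod_mul_distrib, mul_left_comm (∏ s, _)]
  rfl

theorem det_minor_summation_general {F : Type*} [Field F] [CharZero F]
    [∀ m, DecidablePred fun P : ι → Finset κ => ∀ s, (P s).card = m]
    (H : ι → Matrix (Fin (l * n)) κ F) (A : (ι → Finset κ) → F)
    (Q : (ι → Finset (Fin (l * n))) → F)
    (hQ : ∀ I : ι → Finset (Fin (l * n)), ∀ hI : ∀ s, (I s).card = l,
      Q I = ∑ K : ι → Finset κ,
        if hK : ∀ s, (K s).card = l then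
          A K * ∏ s, ((H s).submatrix ((I s).orderEmbOfFin (hI s))
            ((K s).orderEmbOfFin (hK s))).det
        else 0) :
    (∑ P : ι → Finset κ,
        if hP : ∀ s, (P s).card = l * n then
          hyperpf l n (fun I => A fun s => (I s).map ((P s).orderEmbOfFin (hP s)).toEmbedding) *
            ∏ s, ((H s).submatrix id ((P s).orderEmbOfFin (hP s))).det
        else 0) =
      hyperpf l n Q := by
  have hQ_blkSet (σ : ι → BlockIncPerm l n) (k : Fin n) :
      Q (fun s => blkSet l n (σ s).1 k) =
        ∑ g : ι → (Fin l ↪o κ), (A fun s => univ.map (g s).toEmbedding) *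
          ∏ s, ((H s).submatrix ((σ s).blockEmb k) (g s)).det := by
    rw [hQ _ fun s => (σ s).card_blkSet k, ← sum_dite_card_eq]
    simp only [BlockIncPerm.orderEmbOfFin_blkSet, map_orderEmbOfFin_univ]
  rw [hyperpf_eq_sum_joinBlocks H A Q hQ_blkSet, ← sum_hyperpf_map_mul_prod_det,
    ← sum_dite_card_eq]

end Hyperpfaffian

/-- Determinantal minor summation formula. -/
theorem det_minor_summation (l r n N : ℕ) (hl : Even l) (hl0 : 0 < l) (hr : 0 < r)
    (hn : 0 < n) (hN : l * n ≤ N)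
    (H : Fin r → Matrix (Fin (l * n)) (Fin N) F)
    (A : (Fin r → Finset (Fin N)) → F)
    (Q : (Fin r → Finset (Fin (l * n))) → F)
    (hQ : ∀ I : Fin r → Finset (Fin (l * n)), ∀ hI : ∀ s, (I s).card = l,
      Q I = ∑ K : Fin r → Finset (Fin N),
        if hK : ∀ s, (K s).card = l then
          A K * ∏ s : Fin r,
            Matrix.det (Matrix.of fun a b : Fin l =>
              H s ((I s).orderEmbOfFin (hI s) a) ((K s).orderEmbOfFin (hK s) b))
        else 0) :
    (∑ P : Fin r → Finset (Fin N),
        if hP : ∀ s, (P s).card = l * n then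
          hyperpf l n (fun I : Fin r → Finset (Fin (l * n)) =>
              A fun s => (I s).map ((P s).orderEmbOfFin (hP s)).toEmbedding) *
            ∏ s : Fin r,
              Matrix.det (Matrix.of fun a (b : Fin (l * n)) =>
                H s a ((P s).orderEmbOfFin (hP s) b))
        else 0)
    = hyperpf l n Q := by
  exact det_minor_summation_general H A Q hQ
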